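/- arXiv:2007.14740 — 7 statements merged into one kernel-verified Lean document; each statement's English description precedes it below -/
import Mathlib

section
/- A binary matrix x ∈ {0,1}^{r×r} (with x_{ii} = 0) satisfies the assignment constraints together with the Dantzig–Fulkerson–Johnson subtour elimination constraints Σ_{i∈S} Σ_{j∈S, j≠i} x_{ij} ≤ |S| − 1 for every subset S ⊆ {1,…,r} with 2 ≤ |S| ≤ r − 2, if and only if x is the incidence vector of a tour on {1,…,r}. -/
/-- A tour on the node set `Fin r`: a permutation consisting of a single cycle
through all `r` nodes. -/
def IsTour {r : ℕ} (σ : Equiv.Perm (Fin r)) : Prop :=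
  σ.IsCycle ∧ ∀ i, σ i ≠ i

/-- The incidence vector of a tour `σ`: `x i j = 1` iff `j = σ i`. -/
def incidence {r : ℕ} (σ : Equiv.Perm (Fin r)) (i j : Fin r) : ℝ :=
  if σ i = j then 1 else 0

/-!
A binary matrix with unit row and column sums is the matrix of a permutation `σ`, and for such a
matrix the double sum over `S × S` counts the `i ∈ S` with `σ i ∈ S`. Thus the subtour constraint
at `S` says that `σ` does not map `S` into itself. A zero diagonal means that `σ` has no fixed
point, and then `σ` is a single cycle through all nodes exactly when no nonempty proper subset is
mapped into itself. Such a subset and its complement, which is invariant too, would have at least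
two elements each, which is why the constraints with `2 ≤ |S| ≤ r - 2` suffice.
-/

open Equiv Finset

section PermutationMatrix

variable {α R : Type*} [DecidableEq α]

theorem exists_eq_single_of_sum_eq_one [Fintype α] [NonAssocSemiring R] [CharZero R] {v : α → R}
    (hbin : ∀ a, v a = 0 ∨ v a = 1) (hsum : ∑ a, v a = 1) : ∃ a, v = Pi.single a 1 := by
  classical
  have hv : ∀ b, v b = if v b = 1 then 1 else 0 := by grind
  have hcard : #{b | v b = 1} = 1 := by
    rw [sum_congr rfl fun b _ ↦ hv b, sum_boole] at hsum
    exact_mod_cast hsum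
  obtain ⟨a, ha⟩ := card_eq_one.1 hcard
  refine ⟨a, funext fun b ↦ ?_⟩
  have hb : v b = 1 ↔ b = a := by simpa using Finset.ext_iff.1 ha b
  rw [hv b, Pi.single_apply]
  simp only [hb]

theorem exists_eq_permMatrix_iff [Fintype α] [NonAssocSemiring R] [CharZero R] {x : Matrix α α R}
    (hbin : ∀ i j, x i j = 0 ∨ x i j = 1) :
    (∃ σ : Perm α, x = σ.permMatrix R) ↔ (∀ j, ∑ i, x i j = 1) ∧ ∀ i, ∑ j, x i j = 1 := by
  constructor
  · rintro ⟨σ, rfl⟩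
    exact ⟨fun j ↦ by simp [← Equiv.eq_symm_apply], fun i ↦ by simp⟩
  · rintro ⟨hcol, hrow⟩
    choose f hf using fun i ↦ exists_eq_single_of_sum_eq_one (hbin i) (hrow i)
    have hsurj : Function.Surjective f := fun j ↦ by
      obtain ⟨i, -, hi⟩ := exists_ne_zero_of_sum_ne_zero ((hcol j).trans_ne one_ne_zero)
      exact ⟨i, by simpa [hf, Pi.single_apply, eq_comm] using hi⟩
    refine ⟨.ofBijective f (Finite.surjective_iff_bijective.1 hsurj), ?_⟩
    ext i j
    simp [hf, Pi.single_apply, eq_comm]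

theorem sum_sum_permMatrix [NonAssocSemiring R] (σ : Perm α) (S : Finset α) :
    ∑ i ∈ S, ∑ j ∈ S, σ.permMatrix R i j = #{i ∈ S | σ i ∈ S} := by
  simp

theorem sum_sum_permMatrix_le_card_sub_one_iff [Ring R] [PartialOrder R] [IsStrictOrderedRing R]
    {σ : Perm α} {S : Finset α} :
    ∑ i ∈ S, ∑ j ∈ S, σ.permMatrix R i j ≤ #S - 1 ↔ ¬ Set.MapsTo σ S S := by
  calc ∑ i ∈ S, ∑ j ∈ S, σ.permMatrix R i j ≤ #S - 1
    _ ↔ #{i ∈ S | σ i ∈ S} + 1 ≤ #S := by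
      rw [sum_sum_permMatrix, le_sub_iff_add_le]
      norm_cast
    _ ↔ #{i ∈ S | σ i ∈ S} ≠ #S := (card_filter_le S _).lt_iff_ne
    _ ↔ ¬ Set.MapsTo σ S S := card_filter_eq_iff.not

end PermutationMatrix

section InvariantSets

variable {α : Type*}

theorem one_lt_card_of_mapsTo {f : α → α} (hfix : ∀ a, f a ≠ a) {S : Finset α}
    (hS : S.Nonempty) (hf : Set.MapsTo f S S) : 1 < #S :=
  let ⟨a, ha⟩ := hS
  one_lt_card.2 ⟨f a, hf ha, a, ha, hfix a⟩

theorem mapsTo_compl_of_mapsTo {σ : Perm α} {s : Set α} [Finite s] (h : Set.MapsTo σ s s) :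
    Set.MapsTo σ sᶜ sᶜ := fun a ha hσa ↦
  ha (by simpa using Perm.perm_symm_mapsTo_of_mapsTo σ h hσa)

theorem isCycle_iff_forall_mapsTo_eq_univ [Finite α] [Nonempty α] {σ : Perm α}
    (hfix : ∀ a, σ a ≠ a) :
    σ.IsCycle ↔ ∀ s : Set α, s.Nonempty → Set.MapsTo σ s s → s = Set.univ := by
  constructor
  · rintro hσ s ⟨a, ha⟩ hs
    refine Set.eq_univ_of_forall fun b ↦ ?_
    obtain ⟨n, rfl⟩ := hσ.exists_pow_eq (hfix a) (hfix b)
    exact hs.perm_pow n ha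
  · intro h
    obtain ⟨a⟩ := ‹Nonempty α›
    have horbit : {b | σ.SameCycle a b} = Set.univ :=
      h _ ⟨a, .refl σ a⟩ fun _ ↦ Perm.sameCycle_apply_right.2
    exact ⟨a, hfix a, fun b _ ↦ Set.eq_univ_iff_forall.1 horbit b⟩

theorem isCycle_iff_forall_card_not_mapsTo [Fintype α] [Nonempty α] {σ : Perm α}
    (hfix : ∀ a, σ a ≠ a) :
    σ.IsCycle ↔
      ∀ S : Finset α, 2 ≤ #S → #S ≤ Fintype.card α - 2 → ¬ Set.MapsTo σ S S := by
  classical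
  rw [isCycle_iff_forall_mapsTo_eq_univ hfix]
  constructor
  · intro h S hS hS' hmaps
    have huniv : S = univ := by exact_mod_cast h S (card_pos.1 (by omega)) hmaps
    rw [huniv, card_univ] at hS hS'
    omega
  · intro h s hs hmaps
    obtain ⟨S, rfl⟩ := s.toFinite.exists_finset_coe
    by_contra hne
    have hcompl : Sᶜ.Nonempty := by simpa [nonempty_iff_ne_empty] using hne
    have hcard : 1 < #S := one_lt_card_of_mapsTo hfix hs hmaps
    have hcard_compl : 1 < #Sᶜ :=
      one_lt_card_of_mapsTo hfix hcompl (by simpa using mapsTo_compl_of_mapsTo hmaps)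
    have hcard_add : #S + #Sᶜ = Fintype.card α := S.card_add_card_compl
    exact h S hcard (by omega) hmaps

end InvariantSets

theorem incidence_eq_permMatrix {r : ℕ} (σ : Perm (Fin r)) : incidence σ = σ.permMatrix ℝ := by
  ext i j
  simp [incidence]

theorem dfj_characterizes_tours_general {α R : Type*} [Fintype α] [DecidableEq α] [Nonempty α]
    [Ring R] [PartialOrder R] [IsStrictOrderedRing R] (x : Matrix α α R)
    (hbin : ∀ i j, x i j = 0 ∨ x i j = 1) (hdiag : ∀ i, x i i = 0) :
    ((∀ j, ∑ i ∈ univ.erase j, x i j = 1) ∧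
     (∀ i, ∑ j ∈ univ.erase i, x i j = 1) ∧
     (∀ S : Finset α, 2 ≤ #S → #S ≤ Fintype.card α - 2 →
        ∑ i ∈ S, ∑ j ∈ S.erase i, x i j ≤ (#S : R) - 1)) ↔
    (∃ σ : Perm α, (σ.IsCycle ∧ ∀ i, σ i ≠ i) ∧ x = σ.permMatrix R) := by
  have hrow (S : Finset α) (i) : ∑ j ∈ S.erase i, x i j = ∑ j ∈ S, x i j :=
    sum_erase S (hdiag i)
  have hcol (S : Finset α) (j) : ∑ i ∈ S.erase j, x i j = ∑ i ∈ S, x i j :=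
    sum_erase S (hdiag j)
  simp only [hrow, hcol]
  rw [← and_assoc, ← exists_eq_permMatrix_iff hbin, ← exists_and_right]
  refine exists_congr fun σ ↦ and_comm.trans (and_congr_left ?_)
  rintro rfl
  have hfix (i) : σ i ≠ i := by simpa using hdiag i
  simp only [sum_sum_permMatrix_le_card_sub_one_iff]
  rw [← isCycle_iff_forall_card_not_mapsTo hfix, and_iff_left hfix]

/-- A binary matrix with zero diagonal satisfying the assignment constraints
together with the Dantzig–Fulkerson–Johnson subtour elimination constraints
(for every subset `S` with `2 ≤ |S| ≤ r − 2`) is exactly the incidence vector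
of a tour on `{1,…,r}`. -/
theorem dfj_characterizes_tours (r : ℕ) (hr : 3 ≤ r)
    (x : Fin r → Fin r → ℝ)
    (hbin : ∀ i j, x i j = 0 ∨ x i j = 1)
    (hdiag : ∀ i, x i i = 0) :
    ((∀ j : Fin r, ∑ i ∈ Finset.univ.erase j, x i j = 1) ∧
     (∀ i : Fin r, ∑ j ∈ Finset.univ.erase i, x i j = 1) ∧
     (∀ S : Finset (Fin r), 2 ≤ S.card → S.card ≤ r - 2 →
        ∑ i ∈ S, ∑ j ∈ S.erase i, x i j ≤ (S.card : ℝ) - 1)) ↔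
    (∃ σ : Equiv.Perm (Fin r), IsTour σ ∧ ∀ i j, x i j = incidence σ i j) := by
  have : NeZero r := ⟨by omega⟩
  simpa only [IsTour, incidence_eq_permMatrix, ← Matrix.ext_iff, Matrix.of_apply, Fintype.card_fin]
    using dfj_characterizes_tours_general (.of x) hbin hdiag
end

section
/- A binary matrix x ∈ {0,1}^{r×r} (with x_{ii} = 0) satisfying the assignment constraints is the incidence vector of a tour on {1,…,r} if and only if there exist real numbers u_2,…,u_r such that the Miller–Tucker–Zemlin inequalities u_i − u_j + r·x_{ij} ≤ r − 1 hold for all distinct i, j ∈ {2,…,r}. -/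
/-!
The assignment constraints make the matrix a permutation matrix, so only the cycle structure of the
permutation is in question. Along a tour, numbering the nodes by the time of their visit gives
potentials. Conversely, potentials increase by at least one along every arc avoiding the depot,
while no function increases along every arc of a cycle of a finite permutation; hence every cycle
passes through the depot, and there is only one.
-/

open Equiv Finset

section Assignment

variable {R : Type*} [AddCommMonoidWithOne R] [CharZero R]

theorem existsUnique_eq_one_of_sum_eq_one {ι : Type*} [Fintype ι] {f : ι → R}
    (hf : ∀ i, f i = 0 ∨ f i = 1) (hsum : ∑ i, f i = 1) : ∃! i, f i = 1 := by
  classical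
  have hf_ite : ∀ i, f i = if f i = 1 then 1 else 0 := fun i ↦ by
    rcases hf i with h | h <;> simp [h]
  rwa [Fintype.sum_congr _ _ hf_ite, sum_boole, Nat.cast_eq_one,
    ← Fintype.existsUnique_iff_card_one] at hsum

theorem exists_eq_permMatrix_of_sum_eq_one {V : Type*} [Fintype V] [DecidableEq V]
    {A : Matrix V V R} (hA : ∀ i j, A i j = 0 ∨ A i j = 1) (hcol : ∀ j, ∑ i, A i j = 1)
    (hrow : ∀ i, ∑ j, A i j = 1) : ∃ σ : Perm V, A = σ.permMatrix R := by
  choose f hf hf_unique using fun i ↦ existsUnique_eq_one_of_sum_eq_one (hA i) (hrow i)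
  have hf_iff : ∀ i j, f i = j ↔ A i j = 1 := fun i j ↦
    ⟨fun h ↦ h ▸ hf i, fun h ↦ (hf_unique i j h).symm⟩
  have hf_bij : f.Bijective := f.bijective_iff_existsUnique.2 fun j ↦ by
    simpa only [hf_iff] using existsUnique_eq_one_of_sum_eq_one (fun i ↦ hA i j) (hcol j)
  refine ⟨Equiv.ofBijective f hf_bij, Matrix.ext fun i j ↦ ?_⟩
  rcases hA i j with h | h <;> simp [hf_iff, h]

end Assignment

section VisitTime

variable {V : Type*} {σ : Perm V} {d i : V}

/-- The time at which the walk `d, σ d, σ (σ d), …` first visits `i`; along a tour these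
times are the potentials of the nodes. Junk value: `0` if `i` is never visited. -/
noncomputable def visitTime (σ : Perm V) (d i : V) : ℕ :=
  sInf {k | (σ ^ k) d = i}

theorem visitTime_le {k : ℕ} (hk : (σ ^ k) d = i) : visitTime σ d i ≤ k :=
  Nat.sInf_le hk

theorem pow_visitTime_apply [Finite V] (h : σ.SameCycle d i) :
    (σ ^ visitTime σ d i) d = i :=
  Nat.sInf_mem h.exists_nat_pow_eq

theorem visitTime_lt_card [Fintype V] (h : σ.SameCycle d i) :
    visitTime σ d i < Fintype.card V := by
  classical
  by_cases hd : d ∈ σ.support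
  · obtain ⟨k, hk, hki⟩ := h.exists_pow_eq_of_mem_support hd
    exact (visitTime_le hki).trans_lt (hk.trans_le (card_le_univ _))
  · have hdi : d = i := h.eq_of_left (Perm.notMem_support.1 hd)
    exact (visitTime_le (k := 0) hdi).trans_lt (Fintype.card_pos_iff.2 ⟨d⟩)

theorem visitTime_pos [Finite V] (h : σ.SameCycle d i) (hi : i ≠ d) : 0 < visitTime σ d i := by
  refine Nat.pos_of_ne_zero fun h₀ ↦ hi ?_
  simpa [h₀] using (pow_visitTime_apply h).symm

theorem visitTime_apply [Finite V] (h : σ.SameCycle d i) (hi : σ i ≠ d) :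
    visitTime σ d (σ i) = visitTime σ d i + 1 := by
  have h' : σ.SameCycle d (σ i) := Perm.sameCycle_apply_right.2 h
  apply le_antisymm
  · apply visitTime_le
    rw [pow_succ', Perm.mul_apply, pow_visitTime_apply h]
  · obtain ⟨k, hk⟩ := Nat.exists_eq_add_one.2 (visitTime_pos h' hi)
    have hki : σ ((σ ^ k) d) = σ i := by
      rw [← Perm.mul_apply, ← pow_succ', ← hk, pow_visitTime_apply h']
    rw [hk]
    exact Nat.succ_le_succ (visitTime_le (σ.injective hki))

end VisitTime

theorem exists_sameCycle_apply_le {V α : Type*} [Finite V] [LinearOrder α] (σ : Perm V)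
    (u : V → α) (i : V) : ∃ j, σ.SameCycle i j ∧ u (σ j) ≤ u j := by
  obtain ⟨j, hij, hmax⟩ :=
    Set.exists_max_image {j | σ.SameCycle i j} u (Set.toFinite _) ⟨i, .refl σ i⟩
  exact ⟨j, hij, hmax (σ j) (Perm.sameCycle_apply_right.2 hij)⟩

theorem isCycle_iff_forall_sameCycle {V : Type*} {σ : Perm V} (hσ : ∀ i, σ i ≠ i) (d : V) :
    σ.IsCycle ↔ ∀ i, σ.SameCycle d i := by
  simp [Perm.isCycle_iff_sameCycle (hσ d), hσ]

section MTZ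

variable {V K : Type*} [CommRing K] [LinearOrder K]

/-- `u` solves the Miller–Tucker–Zemlin inequalities for the arc matrix `x` with depot `d`. The
coefficient `M`, which is the number of nodes in the original formulation, is kept arbitrary, and
the value `u d` is irrelevant. -/
def IsMTZPotential (d : V) (M : K) (x : Matrix V V K) (u : V → K) : Prop :=
  ∀ i j, i ≠ d → j ≠ d → i ≠ j → u i - u j + M * x i j ≤ M - 1

variable [IsStrictOrderedRing K] {d : V} {M : K}

theorem IsMTZPotential.add_one_le {x : Matrix V V K} {u : V → K} {i j : V}
    (hu : IsMTZPotential d M x u) (hi : i ≠ d) (hj : j ≠ d) (hij : i ≠ j) (hx : x i j = 1) :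
    u i + 1 ≤ u j := by
  have h := hu i j hi hj hij
  rw [hx] at h
  linarith

variable [DecidableEq V] {σ : Perm V}

theorem isMTZPotential_visitTime [Fintype V] (hσ : ∀ i, σ.SameCycle d i)
    (hM : (Fintype.card V : K) - 1 ≤ M) :
    IsMTZPotential d M (σ.permMatrix K) fun i ↦ (visitTime σ d i : K) := by
  intro i j _ hj _
  by_cases hij : σ i = j
  · subst hij
    simp [visitTime_apply (hσ i) hj]
  · have hlast : (visitTime σ d i : K) + 1 ≤ Fintype.card V := by
      exact_mod_cast visitTime_lt_card (hσ i)
    have hfirst : (1 : K) ≤ visitTime σ d j := by exact_mod_cast visitTime_pos (hσ j) hj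
    have harc : σ.permMatrix K i j = 0 := by simp [hij]
    rw [harc, mul_zero]
    linarith

theorem IsMTZPotential.sameCycle [Finite V] {u : V → K}
    (hu : IsMTZPotential d M (σ.permMatrix K) u) (hσ : ∀ i, σ i ≠ i) (i : V) :
    σ.SameCycle d i := by
  by_contra hdi
  obtain ⟨j, hij, hle⟩ := exists_sameCycle_apply_le σ u i
  have hj : j ≠ d := fun h ↦ hdi (h ▸ hij.symm)
  have hσj : σ j ≠ d := fun h ↦ hdi (h ▸ (Perm.sameCycle_apply_right.2 hij).symm)
  linarith [hu.add_one_le hj hσj (hσ j).symm (by simp)]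

theorem isCycle_iff_exists_isMTZPotential [Fintype V] (hσ : ∀ i, σ i ≠ i) (d : V)
    (hM : (Fintype.card V : K) - 1 ≤ M) :
    σ.IsCycle ↔ ∃ u, IsMTZPotential d M (σ.permMatrix K) u := by
  rw [isCycle_iff_forall_sameCycle hσ d]
  exact ⟨fun h ↦ ⟨_, isMTZPotential_visitTime h hM⟩, fun ⟨_, hu⟩ ↦ hu.sameCycle hσ⟩

theorem mtz_characterizes_tours_general [Fintype V] {x : Matrix V V K}
    (hbin : ∀ i j, x i j = 0 ∨ x i j = 1) (hdiag : ∀ i, x i i = 0)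
    (hcol : ∀ j, ∑ i ∈ univ.erase j, x i j = 1) (hrow : ∀ i, ∑ j ∈ univ.erase i, x i j = 1)
    (d : V) (hM : (Fintype.card V : K) - 1 ≤ M) :
    (∃ σ : Perm V, (σ.IsCycle ∧ ∀ i, σ i ≠ i) ∧ x = σ.permMatrix K) ↔
      ∃ u, IsMTZPotential d M x u := by
  constructor
  · rintro ⟨σ, ⟨hcycle, hσ⟩, rfl⟩
    exact (isCycle_iff_exists_isMTZPotential hσ d hM).1 hcycle
  · intro hu
    obtain ⟨σ, rfl⟩ := exists_eq_permMatrix_of_sum_eq_one hbin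
      (fun j ↦ sum_erase univ (f := fun i ↦ x i j) (hdiag j) ▸ hcol j)
      (fun i ↦ sum_erase univ (hdiag i) ▸ hrow i)
    have hσ : ∀ i, σ i ≠ i := by simpa using hdiag
    exact ⟨σ, ⟨(isCycle_iff_exists_isMTZPotential hσ d hM).2 hu, hσ⟩, rfl⟩

end MTZ

/-- A binary matrix with zero diagonal satisfying the assignment constraints is
the incidence vector of a tour iff there exist reals `u_2, …, u_r` satisfying
the Miller–Tucker–Zemlin inequalities `u i − u j + r·x i j ≤ r − 1` for all
distinct `i, j ∈ {2, …, r}` (node `1` is index `0`). -/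
theorem mtz_characterizes_tours (r : ℕ) [NeZero r] (hr : 3 ≤ r)
    (x : Fin r → Fin r → ℝ)
    (hbin : ∀ i j, x i j = 0 ∨ x i j = 1)
    (hdiag : ∀ i, x i i = 0)
    (hassign₁ : ∀ j : Fin r, ∑ i ∈ Finset.univ.erase j, x i j = 1)
    (hassign₂ : ∀ i : Fin r, ∑ j ∈ Finset.univ.erase i, x i j = 1) :
    (∃ σ : Equiv.Perm (Fin r), IsTour σ ∧ ∀ i j, x i j = incidence σ i j) ↔
    (∃ u : Fin r → ℝ, ∀ i j : Fin r, i ≠ 0 → j ≠ 0 → i ≠ j →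
      u i - u j + (r : ℝ) * x i j ≤ (r : ℝ) - 1) := by
  simpa [IsTour, incidence, IsMTZPotential, ← Matrix.ext_iff] using
    mtz_characterizes_tours_general (x := Matrix.of x) hbin hdiag hassign₁ hassign₂ 0
      (M := (r : ℝ)) (by simp)
end

section
/- For every tour σ on {1,…,r} with incidence vector x and positions u, the Desrochers–Laporte inequalities u_i − u_j + (r−1)·x_{ij} − (r−3)·x_{ji} ≤ r − 2 hold for all distinct i, j ∈ {2,…,r}. -/
/-- `u` gives the positions of the nodes along the tour `σ`: `u i` is the
(unique) integer in `{1, …, r}` with `σ^(u i − 1) 1 = i` (node `1` is index `0`). -/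
def IsPositions {r : ℕ} [NeZero r] (σ : Equiv.Perm (Fin r)) (u : Fin r → ℕ) : Prop :=
  ∀ i, 1 ≤ u i ∧ u i ≤ r ∧ (σ ^ (u i - 1)) (0 : Fin r) = i

/-!
The position of a node is one more than an exponent `k` with `(σ ^ k) 0` equal to that node, and on
a cycle of length `r` such exponents are determined modulo `r`. Hence `u (σ i)` and `u i + 1` are
congruent modulo `r`, and if `σ i ≠ 0` both lie in the window `{2, …, r + 1}`, so they are equal.
The lifted inequality is then an equality on the arc `i → j`, reads `4 - r ≤ r - 2` on the reversed
arc `j → i`, and otherwise follows from `u i ≤ r` and `2 ≤ u j`.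
-/

namespace IsPositions

variable {r : ℕ} [NeZero r] {σ : Equiv.Perm (Fin r)} {u : Fin r → ℕ}

theorem isCycleOn_univ (hu : IsPositions σ u) : σ.IsCycleOn Set.univ := by
  have sameCycle_zero (i : Fin r) : σ.SameCycle 0 i := ⟨(u i - 1 : ℕ), (hu i).2.2⟩
  exact ⟨σ.bijective.bijOn_univ, fun i _ j _ => (sameCycle_zero i).symm.trans (sameCycle_zero j)⟩

theorem pow_apply_eq_pow_apply (hu : IsPositions σ u) {i : Fin r} {m n : ℕ} :
    (σ ^ m) i = (σ ^ n) i ↔ m ≡ n [MOD r] := by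
  have hcycle : σ.IsCycleOn (Finset.univ : Finset (Fin r)) := by
    simpa only [Finset.coe_univ] using hu.isCycleOn_univ
  simpa only [Finset.card_fin] using hcycle.pow_apply_eq_pow_apply (Finset.mem_univ i)

theorem apply_modEq (hu : IsPositions σ u) (i : Fin r) : u (σ i) ≡ u i + 1 [MOD r] := by
  obtain ⟨one_le, -, pow_eq⟩ := hu i
  obtain ⟨one_le', -, pow_eq'⟩ := hu (σ i)
  have hpow : (σ ^ (u (σ i) - 1)) 0 = (σ ^ u i) 0 := by
    rw [pow_eq', ← Nat.sub_add_cancel one_le, pow_succ', Equiv.Perm.mul_apply, pow_eq]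
  simpa only [Nat.sub_add_cancel one_le'] using
    (hu.pow_apply_eq_pow_apply.mp hpow).add_right 1

theorem two_le (hu : IsPositions σ u) {i : Fin r} (hi : i ≠ 0) : 2 ≤ u i := by
  obtain ⟨one_le, -, pow_eq⟩ := hu i
  have ne_one : u i ≠ 1 := fun h => hi (by simpa [h] using pow_eq.symm)
  omega

theorem apply_eq_add_one (hu : IsPositions σ u) {i : Fin r} (hi : σ i ≠ 0) :
    u (σ i) = u i + 1 := by
  obtain ⟨one_le, le, -⟩ := hu i
  have two_le' := hu.two_le hi
  have le' := (hu (σ i)).2.1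
  refine (hu.apply_modEq i).eq_of_abs_lt (abs_lt.mpr ?_)
  omega

end IsPositions

/-- For every tour with incidence vector `x` and positions `u`, the
Desrochers–Laporte inequalities
`u i − u j + (r−1)·x i j − (r−3)·x j i ≤ r − 2` hold for all distinct
`i, j ∈ {2, …, r}`. -/
theorem desrochers_laporte_valid (r : ℕ) [NeZero r] (hr : 3 ≤ r)
    (σ : Equiv.Perm (Fin r)) (hσ : IsTour σ)
    (u : Fin r → ℕ) (hu : IsPositions σ u)
    (i j : Fin r) (hi : i ≠ 0) (hj : j ≠ 0) (hij : i ≠ j) :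
    (u i : ℝ) - (u j : ℝ) + ((r : ℝ) - 1) * incidence σ i j
      - ((r : ℝ) - 3) * incidence σ j i ≤ (r : ℝ) - 2 := by
  have hui : (u i : ℝ) ≤ r := by exact_mod_cast (hu i).2.1
  have huj : (2 : ℝ) ≤ u j := by exact_mod_cast hu.two_le hj
  have hr' : (3 : ℝ) ≤ r := by exact_mod_cast hr
  have succ_eq {a b : Fin r} (hab : σ a = b) (hb : b ≠ 0) : (u b : ℝ) = u a + 1 := by
    subst hab
    exact_mod_cast hu.apply_eq_add_one hb
  unfold incidence
  split_ifs with hσij hσji hσji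
  · linarith [succ_eq hσij hj, succ_eq hσji hi]
  · linarith [succ_eq hσij hj]
  · linarith [succ_eq hσji hi]
  · linarith
end

section
/- For every tour σ on {1,…,r} with incidence vector x and positions u, the three-node non-radical inequality u_i − u_k + (r−1)(x_{ij} + x_{jk}) + (r−3)(x_{kj} + x_{ji}) + r·x_{ik} + (r−4)·x_{ki} ≤ 2r − 4 holds for all pairwise distinct i, j, k ∈ {2,…,r}. -/
/-!
Positions increase by one along every arc `a → b` into a node `b ≠ 0`. This gives the
Desrochers–Laporte inequality for the ordered pairs `(i, j)` and `(j, k)`; adding the two yields the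
claim when there is no arc between `i` and `k`. An arc `i → k` forces `u i - u k = -1`, an arc
`k → i` forces `u i - u k ≤ 1`, and either leaves room for at most one further arc through
`j`, unless the tour is a triangle.
-/

section Incidence

variable {r : ℕ} {σ : Equiv.Perm (Fin r)} {a b : Fin r}

lemma incidence_eq_one (hab : σ a = b) : incidence σ a b = 1 := if_pos hab

lemma incidence_eq_zero (hab : σ a ≠ b) : incidence σ a b = 0 := if_neg hab

end Incidence

namespace IsPositions

variable {r : ℕ} [NeZero r] {σ : Equiv.Perm (Fin r)} {u : Fin r → ℕ} {a b c : Fin r}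

lemma one_le (hu : IsPositions σ u) (a : Fin r) : 1 ≤ u a := (hu a).1

lemma le_card (hu : IsPositions σ u) (a : Fin r) : u a ≤ r := (hu a).2.1

lemma pow_apply_zero (hu : IsPositions σ u) (a : Fin r) : (σ ^ (u a - 1)) 0 = a := (hu a).2.2

lemma injective (hu : IsPositions σ u) : Function.Injective u := fun a b hab ↦ by
  rw [← hu.pow_apply_zero a, ← hu.pow_apply_zero b, hab]

lemma surjOn_Icc (hu : IsPositions σ u) : Set.SurjOn u Set.univ (Set.Icc 1 r) := by
  have hmaps : Set.MapsTo u (Finset.univ : Finset (Fin r)) (Finset.Icc 1 r) := fun a _ ↦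
    Finset.mem_coe.2 (Finset.mem_Icc.2 ⟨hu.one_le a, hu.le_card a⟩)
  simpa only [Finset.coe_univ, Finset.coe_Icc] using
    Finset.surjOn_of_injOn_of_card_le u hmaps hu.injective.injOn (by simp)

lemma two_le_s6 (hu : IsPositions σ u) (ha : a ≠ 0) : 2 ≤ u a := by
  have hne : u a ≠ 1 := fun h ↦ ha (by simpa [h] using (hu.pow_apply_zero a).symm)
  have := hu.one_le a
  omega

lemma apply_of_lt (hu : IsPositions σ u) (ha : u a < r) : u (σ a) = u a + 1 := by
  obtain ⟨b, -, hb⟩ := hu.surjOn_Icc ⟨Nat.le_add_left 1 (u a), ha⟩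
  have hσa : σ a = b := by
    rw [← hu.pow_apply_zero b, hb, Nat.add_sub_cancel, ← Nat.sub_add_cancel (hu.one_le a),
      pow_succ', Equiv.Perm.mul_apply, hu.pow_apply_zero]
  rw [hσa, hb]

lemma apply_of_eq (hu : IsPositions σ u) (ha : u a = r) : u (σ a) = 1 := by
  by_contra hne
  have hpos := hu.one_le (σ a)
  have hle := hu.le_card (σ a)
  obtain ⟨b, -, hb⟩ : u (σ a) - 1 ∈ u '' Set.univ := hu.surjOn_Icc ⟨by omega, by omega⟩
  have hσb : u (σ b) = u (σ a) := by rw [hu.apply_of_lt (by omega)]; omega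
  have hba : b = a := σ.injective (hu.injective hσb)
  subst hba
  omega

lemma apply_eq_add_one_or (hu : IsPositions σ u) (a : Fin r) :
    u (σ a) = u a + 1 ∨ u (σ a) = 1 ∧ u a = r :=
  (hu.le_card a).lt_or_eq.imp hu.apply_of_lt fun ha ↦ ⟨hu.apply_of_eq ha, ha⟩

lemma eq_add_one (hu : IsPositions σ u) (hb : b ≠ 0) (hab : σ a = b) : u b = u a + 1 := by
  subst hab
  have := hu.two_le_s6 hb
  have := hu.apply_eq_add_one_or a
  omega

lemma apply_le_add_one (hu : IsPositions σ u) (a : Fin r) : u (σ a) ≤ u a + 1 := by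
  have := hu.apply_eq_add_one_or a
  omega

lemma three_le_card (hu : IsPositions σ u) (hb : b ≠ 0) (hc : c ≠ 0) (hbc : b ≠ c) : 3 ≤ r := by
  have hub := hu.two_le_s6 hb
  have huc := hu.two_le_s6 hc
  have hbr := hu.le_card b
  have hcr := hu.le_card c
  have hne := hu.injective.ne hbc
  omega

lemma card_eq_two_of_two_cycle (hu : IsPositions σ u) (hb : b ≠ 0)
    (hab : σ a = b) (hba : σ b = a) : r = 2 := by
  have hub := hu.eq_add_one hb hab
  have hua := hu.apply_eq_add_one_or b
  rw [hba] at hua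
  omega

lemma card_eq_three_of_three_cycle (hu : IsPositions σ u) (hb : b ≠ 0) (hc : c ≠ 0)
    (hab : σ a = b) (hbc : σ b = c) (hca : σ c = a) : r = 3 := by
  have hub := hu.eq_add_one hb hab
  have huc := hu.eq_add_one hc hbc
  have hua := hu.apply_eq_add_one_or c
  rw [hca] at hua
  omega

/-- The Miller–Tucker–Zemlin inequality in the lifted form of Desrochers and Laporte. -/
lemma desrochers_laporte (hu : IsPositions σ u) (hb : b ≠ 0) :
    (u a : ℝ) - u b + (r - 1) * incidence σ a b + (r - 3) * incidence σ b a ≤ r - 2 := by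
  have hua : (u a : ℝ) ≤ r := mod_cast hu.le_card a
  have hub : (2 : ℝ) ≤ u b := mod_cast hu.two_le_s6 hb
  by_cases hab : σ a = b <;> by_cases hba : σ b = a
  · have hstep : (u b : ℝ) = u a + 1 := mod_cast hu.eq_add_one hb hab
    have hr : (r : ℝ) = 2 := mod_cast hu.card_eq_two_of_two_cycle hb hab hba
    rw [incidence_eq_one hab, incidence_eq_one hba]
    linarith
  · have hstep : (u b : ℝ) = u a + 1 := mod_cast hu.eq_add_one hb hab
    rw [incidence_eq_one hab, incidence_eq_zero hba]
    linarith
  · have hstep : (u a : ℝ) ≤ u b + 1 := mod_cast hba ▸ hu.apply_le_add_one b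
    rw [incidence_eq_zero hab, incidence_eq_one hba]
    linarith
  · rw [incidence_eq_zero hab, incidence_eq_zero hba]
    linarith

lemma sub_add_return_path_le (hu : IsPositions σ u) (hb : b ≠ 0) (hc : c ≠ 0) (hbc : b ≠ c)
    (hac : σ a = c) :
    (u a : ℝ) - u c + (r - 3) * (incidence σ c b + incidence σ b a) ≤ r - 4 := by
  have hstep : (u c : ℝ) = u a + 1 := mod_cast hu.eq_add_one hc hac
  have hr : (3 : ℝ) ≤ r := mod_cast hu.three_le_card hb hc hbc
  by_cases hcb : σ c = b <;> by_cases hba : σ b = a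
  · have htri : (r : ℝ) = 3 := mod_cast hu.card_eq_three_of_three_cycle hc hb hac hcb hba
    rw [htri]
    linarith
  · rw [incidence_eq_one hcb, incidence_eq_zero hba]
    linarith
  · rw [incidence_eq_zero hcb, incidence_eq_one hba]
    linarith
  · rw [incidence_eq_zero hcb, incidence_eq_zero hba]
    linarith

lemma sub_add_path_le (hu : IsPositions σ u) (hb : b ≠ 0) (hc : c ≠ 0) (hca : σ c = a) :
    (u a : ℝ) - u c + (r - 1) * (incidence σ a b + incidence σ b c) ≤ r := by
  have hstep : (u a : ℝ) ≤ u c + 1 := mod_cast hca ▸ hu.apply_le_add_one c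
  have hr : (2 : ℝ) ≤ r := mod_cast (hu.two_le_s6 hc).trans (hu.le_card c)
  by_cases hab : σ a = b <;> by_cases hbc : σ b = c
  · have htri : (r : ℝ) = 3 := mod_cast hu.card_eq_three_of_three_cycle hb hc hab hbc hca
    have hub : (u b : ℝ) = u a + 1 := mod_cast hu.eq_add_one hb hab
    have huc : (u c : ℝ) = u b + 1 := mod_cast hu.eq_add_one hc hbc
    rw [incidence_eq_one hab, incidence_eq_one hbc]
    linarith
  · rw [incidence_eq_one hab, incidence_eq_zero hbc]
    linarith
  · rw [incidence_eq_zero hab, incidence_eq_one hbc]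
    linarith
  · rw [incidence_eq_zero hab, incidence_eq_zero hbc]
    linarith

end IsPositions

theorem nonradical_valid_general {r : ℕ} [NeZero r] {σ : Equiv.Perm (Fin r)} {u : Fin r → ℕ}
    (hu : IsPositions σ u) {i j k : Fin r} (hj : j ≠ 0) (hk : k ≠ 0)
    (hij : i ≠ j) (hjk : j ≠ k) :
    (u i : ℝ) - (u k : ℝ) + ((r : ℝ) - 1) * (incidence σ i j + incidence σ j k)
      + ((r : ℝ) - 3) * (incidence σ k j + incidence σ j i)
      + (r : ℝ) * incidence σ i k + ((r : ℝ) - 4) * incidence σ k i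
      ≤ 2 * (r : ℝ) - 4 := by
  have hr : 3 ≤ r := hu.three_le_card hj hk hjk
  by_cases hσik : σ i = k
  · have hσij : σ i ≠ j := fun h ↦ hjk (h.symm.trans hσik)
    have hσjk : σ j ≠ k := fun h ↦ hij (σ.injective (hσik.trans h.symm))
    have hσki : σ k ≠ i := fun h ↦ by
      have := hu.card_eq_two_of_two_cycle hk hσik h
      omega
    rw [incidence_eq_zero hσij, incidence_eq_zero hσjk, incidence_eq_one hσik,
      incidence_eq_zero hσki]
    linarith [hu.sub_add_return_path_le hj hk hjk hσik]
  by_cases hσki : σ k = i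
  · have hσkj : σ k ≠ j := fun h ↦ hij (hσki.symm.trans h)
    have hσji : σ j ≠ i := fun h ↦ hjk (σ.injective (h.trans hσki.symm))
    rw [incidence_eq_zero hσkj, incidence_eq_zero hσji, incidence_eq_zero hσik,
      incidence_eq_one hσki]
    linarith [hu.sub_add_path_le hj hk hσki]
  · rw [incidence_eq_zero hσik, incidence_eq_zero hσki]
    linarith [hu.desrochers_laporte (a := i) hj, hu.desrochers_laporte (a := j) hk]

theorem nonradical_valid (r : ℕ) [NeZero r] (hr : 4 ≤ r)
    (σ : Equiv.Perm (Fin r)) (hσ : IsTour σ)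
    (u : Fin r → ℕ) (hu : IsPositions σ u)
    (i j k : Fin r) (hi : i ≠ 0) (hj : j ≠ 0) (hk : k ≠ 0)
    (hij : i ≠ j) (hik : i ≠ k) (hjk : j ≠ k) :
    (u i : ℝ) - (u k : ℝ) + ((r : ℝ) - 1) * (incidence σ i j + incidence σ j k)
      + ((r : ℝ) - 3) * (incidence σ k j + incidence σ j i)
      + (r : ℝ) * incidence σ i k + ((r : ℝ) - 4) * incidence σ k i
      ≤ 2 * (r : ℝ) - 4 := by
  exact nonradical_valid_general hu hj hk hij hjk
end

section
/- For every tour σ on {1,…,r} with incidence vector x, the lifted circuit inequality 2·x_{ik} + x_{ki} + x_{ij} + x_{jk} ≤ 2 holds for all pairwise distinct i, j, k ∈ {2,…,r} (this inequality is obtained by summing the two 2PATH inequalities for the triple (i,j,k) and dividing by 2r − 5). -/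
/- The inequality is a Chvátal–Gomory cut. Adding the subtour elimination constraints for
`{i, j, k}` and `{i, k}`, the outdegree constraint at `i` and the indegree constraint at `k`
gives twice the left-hand side, up to nonnegative terms, and the right-hand side
`2 + 1 + 1 + 1 = 5`. Since the left-hand side is an integer, `5 / 2` rounds down to `2`. -/

open Finset

theorem exists_mem_apply_notMem_of_isCycleOn {α : Type*} {f : Equiv.Perm α} {s t : Finset α}
    (hf : f.IsCycleOn t) (hs : s.Nonempty) (hst : s ⊂ t) : ∃ a ∈ s, f a ∉ s := by
  by_contra! hclosed
  obtain ⟨a, ha⟩ := hs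
  obtain ⟨b, hbt, hbs⟩ := exists_of_ssubset hst
  obtain ⟨n, -, rfl⟩ := hf.exists_pow_eq (hst.subset ha) hbt
  have hmaps : Set.MapsTo f s s := hclosed
  exact hbs (f.iterate_eq_pow n ▸ hmaps.iterate n ha)

section Incidence

variable {r : ℕ} (σ : Equiv.Perm (Fin r))

theorem incidence_nonneg (i j : Fin r) : 0 ≤ incidence σ i j := by
  unfold incidence
  positivity

theorem exists_int_cast_eq_incidence (i j : Fin r) : ∃ n : ℤ, (n : ℝ) = incidence σ i j :=
  ⟨if σ i = j then 1 else 0, by simp [incidence]⟩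

theorem incidence_inv (i j : Fin r) : incidence σ⁻¹ i j = incidence σ j i := by
  simp only [incidence, Equiv.Perm.inv_eq_iff_eq, eq_comm (a := i)]

theorem sum_incidence (i : Fin r) (t : Finset (Fin r)) :
    ∑ j ∈ t, incidence σ i j = if σ i ∈ t then 1 else 0 :=
  sum_ite_eq t (σ i) fun _ ↦ 1

theorem incidence_add_incidence_le_one_of_ne_head (i : Fin r) {j k : Fin r} (hjk : j ≠ k) :
    incidence σ i j + incidence σ i k ≤ 1 := by
  rw [← sum_pair hjk, sum_incidence]
  split_ifs <;> norm_num

theorem incidence_add_incidence_le_one_of_ne_tail {i j : Fin r} (hij : i ≠ j) (k : Fin r) :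
    incidence σ i k + incidence σ j k ≤ 1 := by
  simpa only [incidence_inv] using incidence_add_incidence_le_one_of_ne_head σ⁻¹ k hij

end Incidence

namespace IsTour

variable {r : ℕ} {σ : Equiv.Perm (Fin r)}

theorem isCycleOn_univ (hσ : IsTour σ) : σ.IsCycleOn (univ : Finset (Fin r)) := by
  simpa [hσ.2] using hσ.1.isCycleOn

theorem subtour_elimination (hσ : IsTour σ) {s : Finset (Fin r)} (hs : s.Nonempty)
    (hs_univ : s ≠ univ) : ∑ i ∈ s, ∑ j ∈ s, incidence σ i j ≤ #s - 1 := by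
  obtain ⟨a, ha, hσa⟩ := exists_mem_apply_notMem_of_isCycleOn hσ.isCycleOn_univ hs
    (ssubset_univ_iff.mpr hs_univ)
  have hcard : #{i ∈ s | σ i ∈ s} < #s := card_lt_card (filter_ssubset.mpr ⟨a, ha, hσa⟩)
  calc ∑ i ∈ s, ∑ j ∈ s, incidence σ i j
      = #{i ∈ s | σ i ∈ s} := by simp only [sum_incidence, sum_boole]
    _ ≤ #s - 1 := by
      rw [le_sub_iff_add_le]
      exact_mod_cast hcard

theorem subtour_elimination_pair (hσ : IsTour σ) (hr : 3 ≤ r) {i j : Fin r} (hij : i ≠ j) :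
    incidence σ i j + incidence σ j i ≤ 1 := by
  have hcard : #{i, j} = 2 := card_pair hij
  have hproper : ({i, j} : Finset (Fin r)) ≠ univ := by
    rw [← card_lt_iff_ne_univ, hcard, Fintype.card_fin]
    exact hr
  have hsubtour := hσ.subtour_elimination (insert_nonempty i {j}) hproper
  simp only [sum_pair hij, hcard] at hsubtour
  push_cast at hsubtour
  linarith [incidence_nonneg σ i i, incidence_nonneg σ j j]

theorem subtour_elimination_triple (hσ : IsTour σ) (hr : 4 ≤ r) {i j k : Fin r}
    (hij : i ≠ j) (hik : i ≠ k) (hjk : j ≠ k) :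
    incidence σ i j + incidence σ j i + incidence σ i k + incidence σ k i +
      incidence σ j k + incidence σ k j ≤ 2 := by
  have hcard : #{i, j, k} = 3 := card_eq_three.mpr ⟨i, j, k, hij, hik, hjk, rfl⟩
  have hproper : ({i, j, k} : Finset (Fin r)) ≠ univ := by
    rw [← card_lt_iff_ne_univ, hcard, Fintype.card_fin]
    exact hr
  have hi : i ∉ ({j, k} : Finset (Fin r)) := by simp [hij, hik]
  have hsubtour := hσ.subtour_elimination (insert_nonempty i {j, k}) hproper
  simp only [sum_insert hi, sum_pair hjk, hcard] at hsubtour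
  push_cast at hsubtour
  linarith [incidence_nonneg σ i i, incidence_nonneg σ j j, incidence_nonneg σ k k]

end IsTour

theorem lifted_circuit_valid_general {r : ℕ} (hr : 4 ≤ r) {σ : Equiv.Perm (Fin r)}
    (hσ : IsTour σ) {i j k : Fin r} (hij : i ≠ j) (hik : i ≠ k) (hjk : j ≠ k) :
    2 * incidence σ i k + incidence σ k i + incidence σ i j + incidence σ j k ≤ 2 := by
  have htriple := hσ.subtour_elimination_triple hr hij hik hjk
  have hpair := hσ.subtour_elimination_pair (by lia) hik
  have hout := incidence_add_incidence_le_one_of_ne_head σ i hjk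
  have hin := incidence_add_incidence_le_one_of_ne_tail σ hij k
  have hfractional :
      2 * incidence σ i k + incidence σ k i + incidence σ i j + incidence σ j k < 3 := by
    linarith [incidence_nonneg σ j i, incidence_nonneg σ k j]
  obtain ⟨xik, hxik⟩ := exists_int_cast_eq_incidence σ i k
  obtain ⟨xki, hxki⟩ := exists_int_cast_eq_incidence σ k i
  obtain ⟨xij, hxij⟩ := exists_int_cast_eq_incidence σ i j
  obtain ⟨xjk, hxjk⟩ := exists_int_cast_eq_incidence σ j k
  rw [← hxik, ← hxki, ← hxij, ← hxjk] at hfractional ⊢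
  norm_cast at hfractional ⊢
  exact Int.lt_add_one_iff.mp hfractional

/-- For every tour with incidence vector `x`, the lifted circuit inequality
`2·x i k + x k i + x i j + x j k ≤ 2` holds for all pairwise distinct
`i, j, k ∈ {2, …, r}` (node `1` is index `0`). -/
theorem lifted_circuit_valid (r : ℕ) [NeZero r] (hr : 4 ≤ r)
    (σ : Equiv.Perm (Fin r)) (hσ : IsTour σ)
    (i j k : Fin r) (hi : i ≠ 0) (hj : j ≠ 0) (hk : k ≠ 0)
    (hij : i ≠ j) (hik : i ≠ k) (hjk : j ≠ k) :
    2 * incidence σ i k + incidence σ k i + incidence σ i j + incidence σ j k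
      ≤ 2 :=
  lifted_circuit_valid_general hr hσ hij hik hjk
end

section
/- For every feasible plan (q, I, δ) of the Wagner–Whitin lot-sizing problem there exists a feasible plan (q', I', δ') of total cost at most that of (q, I, δ) which satisfies the zero-inventory ordering property: q'_t · I'_{t−1} = 0 for every period t ∈ {1,…,N} (with I'_0 = 0). -/
/-- A feasible plan `(q, I, δ)` of the Wagner–Whitin lot-sizing problem over
periods `1, …, N` with demands `d`: zero initial inventory, nonnegative order
quantities and inventory levels, binary setup indicators, inventory balance,
and no ordering without a setup. -/
def FeasiblePlan (N : ℕ) (d q I δ : ℕ → ℝ) : Prop :=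
  I 0 = 0 ∧
  ∀ t ∈ Finset.Icc 1 N,
    0 ≤ q t ∧ 0 ≤ I t ∧ (δ t = 0 ∨ δ t = 1) ∧
    I t = I (t - 1) + q t - d t ∧ (δ t = 0 → q t = 0)

/-- Total cost of a plan: fixed ordering, holding and unit ordering costs. -/
def planCost (N : ℕ) (K h v : ℝ) (q I δ : ℕ → ℝ) : ℝ :=
  ∑ t ∈ Finset.Icc 1 N, (K * δ t + h * I t + v * q t)

/-!
Keep the setups of the given plan, but let every setup order exactly the demand up to the next
setup. The resulting inventory is empty just before each setup, and backward induction shows that it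
never exceeds the given one: with no order in period `t + 1`, any feasible inventory satisfies
`I t = d (t + 1) + I (t + 1)`. Setup costs are unchanged, holding costs do not increase, and neither
does the total quantity ordered, since it equals total demand plus final inventory.
-/

/-- The demand of the periods after `t` and before the next setup (or up to the horizon `N`): the
least inventory with which period `t` can end under the setup indicators `δ`. -/
noncomputable def residualDemand (N : ℕ) (d δ : ℕ → ℝ) (t : ℕ) : ℝ :=
  ∑ s ∈ Finset.Ioc t N with ∀ r ∈ Finset.Ioc t s, δ r = 0, d s

/-- The order quantities that cover, at each setup of `δ`, exactly the demand up to the next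
setup. -/
noncomputable def zeroInventoryOrder (N : ℕ) (d δ : ℕ → ℝ) (t : ℕ) : ℝ :=
  if δ t = 0 then 0 else d t + residualDemand N d δ t

section residualDemand

variable {N t : ℕ} {d δ : ℕ → ℝ}

theorem residualDemand_horizon : residualDemand N d δ N = 0 := by
  simp [residualDemand]

theorem residualDemand_nonneg (hd : ∀ t ∈ Finset.Icc 1 N, 0 ≤ d t) :
    0 ≤ residualDemand N d δ t := by
  refine Finset.sum_nonneg fun s hs ↦ hd s ?_
  obtain ⟨hts, hsN⟩ := Finset.mem_Ioc.1 (Finset.mem_filter.1 hs).1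
  exact Finset.mem_Icc.2 ⟨t.zero_le.trans_lt hts, hsN⟩

theorem residualDemand_of_setup (hδ : δ (t + 1) ≠ 0) : residualDemand N d δ t = 0 := by
  refine Finset.sum_eq_zero fun s hs ↦ ?_
  obtain ⟨hts, hno_setup⟩ := Finset.mem_filter.1 hs
  have hnext : t + 1 ∈ Finset.Ioc t s :=
    Finset.mem_Ioc.2 ⟨t.lt_succ_self, (Finset.mem_Ioc.1 hts).1⟩
  exact absurd (hno_setup (t + 1) hnext) hδ

theorem residualDemand_of_no_setup (ht : t < N) (hδ : δ (t + 1) = 0) :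
    residualDemand N d δ t = d (t + 1) + residualDemand N d δ (t + 1) := by
  have hperiods : {s ∈ Finset.Ioc t N | ∀ r ∈ Finset.Ioc t s, δ r = 0} =
      insert (t + 1) {s ∈ Finset.Ioc (t + 1) N | ∀ r ∈ Finset.Ioc (t + 1) s, δ r = 0} := by
    ext s
    grind
  rw [residualDemand, hperiods, Finset.sum_insert (by simp), residualDemand]

theorem residualDemand_balance (ht : t < N) :
    residualDemand N d δ (t + 1) =
      residualDemand N d δ t + zeroInventoryOrder N d δ (t + 1) - d (t + 1) := by
  by_cases hδ : δ (t + 1) = 0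
  · simp [residualDemand_of_no_setup ht hδ, zeroInventoryOrder, hδ]
  · simp [residualDemand_of_setup hδ, zeroInventoryOrder, hδ]

theorem zeroInventoryOrder_nonneg (hd : ∀ t ∈ Finset.Icc 1 N, 0 ≤ d t)
    (ht : t ∈ Finset.Icc 1 N) : 0 ≤ zeroInventoryOrder N d δ t := by
  unfold zeroInventoryOrder
  split_ifs
  · exact le_rfl
  · exact add_nonneg (hd t ht) (residualDemand_nonneg hd)

theorem zeroInventoryOrder_mul_residualDemand :
    zeroInventoryOrder N d δ (t + 1) * residualDemand N d δ t = 0 := by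
  by_cases hδ : δ (t + 1) = 0
  · simp [zeroInventoryOrder, hδ]
  · simp [residualDemand_of_setup hδ]

end residualDemand

namespace FeasiblePlan

variable {N t : ℕ} {d q I δ : ℕ → ℝ}

theorem inventory_nonneg (hfeas : FeasiblePlan N d q I δ) (ht : t ≤ N) : 0 ≤ I t := by
  rcases t.eq_zero_or_pos with rfl | hpos
  · exact hfeas.1.ge
  · exact (hfeas.2 t (Finset.mem_Icc.2 ⟨hpos, ht⟩)).2.1

theorem inventory_of_no_setup (hfeas : FeasiblePlan N d q I δ) (ht : t < N)
    (hδ : δ (t + 1) = 0) : I t = d (t + 1) + I (t + 1) := by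
  obtain ⟨-, -, -, hbalance, hno_order⟩ :=
    hfeas.2 (t + 1) (Finset.mem_Icc.2 ⟨t.succ_pos, ht⟩)
  rw [hno_order hδ, Nat.add_sub_cancel] at hbalance
  linarith

theorem residualDemand_le_inventory (hfeas : FeasiblePlan N d q I δ) (ht : t ≤ N) :
    residualDemand N d δ t ≤ I t := by
  induction ht using Nat.decreasingInduction with
  | self => exact residualDemand_horizon.trans_le (hfeas.inventory_nonneg le_rfl)
  | of_succ t ht ih =>
    by_cases hδ : δ (t + 1) = 0
    · rw [residualDemand_of_no_setup ht hδ, hfeas.inventory_of_no_setup ht hδ]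
      gcongr
    · exact (residualDemand_of_setup hδ).trans_le (hfeas.inventory_nonneg ht.le)

theorem feasiblePlan_zeroInventoryOrder (hfeas : FeasiblePlan N d q I δ)
    (hd : ∀ t ∈ Finset.Icc 1 N, 0 ≤ d t) :
    FeasiblePlan N d (zeroInventoryOrder N d δ) (residualDemand N d δ) δ := by
  have hinitial : residualDemand N d δ 0 = 0 :=
    ((hfeas.residualDemand_le_inventory N.zero_le).trans_eq hfeas.1).antisymm
      (residualDemand_nonneg hd)
  refine ⟨hinitial, fun t ht ↦ ?_⟩
  obtain ⟨hpos, htN⟩ := Finset.mem_Icc.1 ht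
  obtain ⟨s, rfl⟩ := Nat.exists_eq_add_of_le' hpos
  exact ⟨zeroInventoryOrder_nonneg hd ht, residualDemand_nonneg hd, (hfeas.2 _ ht).2.2.1,
    residualDemand_balance htN, fun hδ ↦ if_pos hδ⟩

theorem sum_order (hfeas : FeasiblePlan N d q I δ) :
    ∑ t ∈ Finset.Icc 1 N, q t = ∑ t ∈ Finset.Icc 1 N, d t + I N := by
  have horder : ∀ t ∈ Finset.Icc 1 N, q t = d t + (I t - I (t - 1)) := fun t ht ↦ by
    linarith [(hfeas.2 t ht).2.2.2.1]
  have htelescope : ∑ t ∈ Finset.Icc 1 N, (I t - I (t - 1)) = I N - I 0 := by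
    rw [← Finset.Ico_add_one_right_eq_Icc]
    exact Finset.sum_Ico_sub (f := fun t ↦ I (t - 1)) (Nat.le_add_left 1 N)
  rw [Finset.sum_congr rfl horder, Finset.sum_add_distrib, htelescope, hfeas.1, sub_zero]

theorem planCost_eq (hfeas : FeasiblePlan N d q I δ) (K h v : ℝ) :
    planCost N K h v q I δ =
      K * ∑ t ∈ Finset.Icc 1 N, δ t + h * ∑ t ∈ Finset.Icc 1 N, I t +
        v * (∑ t ∈ Finset.Icc 1 N, d t + I N) := by
  simp only [planCost, Finset.sum_add_distrib, ← Finset.mul_sum, hfeas.sum_order]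

theorem planCost_le_of_inventory_le {q' I' : ℕ → ℝ} {h v : ℝ}
    (hfeas' : FeasiblePlan N d q' I' δ) (hfeas : FeasiblePlan N d q I δ)
    (hI : ∀ t ≤ N, I' t ≤ I t) (K : ℝ) (hh : 0 ≤ h) (hv : 0 ≤ v) :
    planCost N K h v q' I' δ ≤ planCost N K h v q I δ := by
  rw [hfeas'.planCost_eq, hfeas.planCost_eq]
  gcongr with t ht
  · exact hI t (Finset.mem_Icc.1 ht).2
  · exact hI N le_rfl

end FeasiblePlan

theorem zero_inventory_ordering_general (N : ℕ) (d : ℕ → ℝ)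
    (hd : ∀ t ∈ Finset.Icc 1 N, 0 ≤ d t)
    (q I δ : ℕ → ℝ) (hfeas : FeasiblePlan N d q I δ) :
    ∃ q' I' : ℕ → ℝ, FeasiblePlan N d q' I' δ ∧
      (∀ K h v : ℝ, 0 ≤ h → 0 ≤ v → planCost N K h v q' I' δ ≤ planCost N K h v q I δ) ∧
      ∀ t ∈ Finset.Icc 1 N, q' t * I' (t - 1) = 0 := by
  have hfeas' := hfeas.feasiblePlan_zeroInventoryOrder hd
  refine ⟨zeroInventoryOrder N d δ, residualDemand N d δ, hfeas', fun K h v hh hv ↦ ?_,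
    fun t ht ↦ ?_⟩
  · exact hfeas'.planCost_le_of_inventory_le hfeas
      (fun t ht ↦ hfeas.residualDemand_le_inventory ht) K hh hv
  · obtain ⟨s, rfl⟩ := Nat.exists_eq_add_of_le' (Finset.mem_Icc.1 ht).1
    exact zeroInventoryOrder_mul_residualDemand

/-- For every feasible plan of the Wagner–Whitin lot-sizing problem there is a
feasible plan of no greater total cost satisfying the zero-inventory ordering
property `q' t · I' (t−1) = 0` for every period `t ∈ {1, …, N}`. -/
theorem zero_inventory_ordering (N : ℕ) (d : ℕ → ℝ)
    (hd : ∀ t ∈ Finset.Icc 1 N, 0 < d t)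
    (K h v : ℝ) (hK : 0 ≤ K) (hh : 0 ≤ h) (hv : 0 ≤ v)
    (q I δ : ℕ → ℝ) (hfeas : FeasiblePlan N d q I δ) :
    ∃ q' I' δ' : ℕ → ℝ, FeasiblePlan N d q' I' δ' ∧
      planCost N K h v q' I' δ' ≤ planCost N K h v q I δ ∧
      ∀ t ∈ Finset.Icc 1 N, q' t * I' (t - 1) = 0 := by
  obtain ⟨q', I', hfeas', hcost, hzio⟩ :=
    zero_inventory_ordering_general N d (fun t ht ↦ (hd t ht).le) q I δ hfeas
  exact ⟨q', I', δ, hfeas', hcost K h v hh hv, hzio⟩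
end

section
/- The minimum total cost over all feasible plans of the Wagner–Whitin lot-sizing problem equals the minimum, over all increasing sequences 1 = t_1 < t_2 < ⋯ < t_m = N + 1, of Σ_{l=1}^{m−1} ω(t_l, t_{l+1}), where ω(i, j) = K + v·Σ_{k=i}^{j−1} d_k + h·Σ_{k=i}^{j−1} (k − i)·d_k for 1 ≤ i < j ≤ N + 1; i.e., the lot-sizing problem is equivalent to a shortest path problem on the acyclic network with nodes 1,…,N+1 and arc costs ω(i, j). -/
/-- The arc cost `ω(i, j) = K + v·Σ_{k=i}^{j−1} d k + h·Σ_{k=i}^{j−1} (k−i)·d k`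
of ordering in period `i` to cover the demands of periods `i, …, j − 1`. -/
def arcCost (K h v : ℝ) (d : ℕ → ℝ) (i j : ℕ) : ℝ :=
  K + v * ∑ k ∈ Finset.Ico i j, d k +
    h * ∑ k ∈ Finset.Ico i j, ((k : ℝ) - (i : ℝ)) * d k

/-!
An arc `i → j` of the network is a lot: an order in period `i` for exactly the demand of periods
`i, …, j - 1`. Its cost is the arc cost, so every path is a plan of the same cost.

Conversely, follow a plan period by period. At the end of period `n`, with the last order placed in
period `i`, value each unit of the stock `I n` at `v + h * (n + 1 - i)`, the cost of buying it in
period `i` and holding it through period `n`. The invariant is that the plan has spent at least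
this value plus the cost of the path through its ordering periods. Without an order both sides grow
equally; an order lowers the value of the incoming stock to `v` per unit, as `h` is nonnegative.
-/

open Finset

section IncreasingPath

/-- `IncreasingPath w a b c`: the network whose arcs are the pairs `i < j`, with arc costs `w i j`,
has a path from node `a` to node `b` of total cost `c`. Only the cost of a path is recorded. -/
inductive IncreasingPath {V M : Type*} [LT V] [Zero M] [Add M] (w : V → V → M) (a : V) :
    V → M → Prop
  | nil : IncreasingPath w a a 0
  | snoc {i j : V} {c : M} :
      IncreasingPath w a i c → i < j → IncreasingPath w a j (c + w i j)

namespace IncreasingPath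

variable {V M : Type*} {w : V → V → M} {a b : V} {c : M}

theorem le [Preorder V] [Zero M] [Add M] (hp : IncreasingPath w a b c) : a ≤ b := by
  induction hp with
  | nil => exact le_rfl
  | snoc _ hij ih => exact ih.trans hij.le

theorem exists_cost_of_le [PartialOrder V] [Zero M] [Add M] (w : V → V → M) (hab : a ≤ b) :
    ∃ c, IncreasingPath w a b c := by
  rcases hab.eq_or_lt with rfl | hlt
  · exact ⟨0, nil⟩
  · exact ⟨0 + w a b, nil.snoc hlt⟩

theorem finite_setOf_cost [Preorder V] [LocallyFiniteOrderBot V] [Zero M] [Add M]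
    (w : V → V → M) (a b : V) :
    {c | IncreasingPath w a b c}.Finite := by
  have card_Iio_strictMono : StrictMono fun i : V => #(Iio i) := fun _ _ hij =>
    card_lt_card (Iio_ssubset_Iio hij)
  have : WellFoundedLT V := card_Iio_strictMono.wellFoundedLT
  induction b using WellFoundedLT.induction with
  | ind b ih =>
    have hfin : (⋃ i ∈ Set.Iio b, (· + w i b) '' {c | IncreasingPath w a i c}).Finite :=
      (Set.finite_Iio b).biUnion fun i hi => (ih i hi).image _
    refine (hfin.insert 0).subset ?_
    rintro _ (_ | ⟨hp, hib⟩)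
    · exact Set.mem_insert _ _
    · exact Set.mem_insert_of_mem _ (Set.mem_biUnion hib (Set.mem_image_of_mem _ hp))

theorem exists_isLeast_cost [PartialOrder V] [LocallyFiniteOrderBot V] [Zero M] [Add M]
    [LinearOrder M] (w : V → V → M) (hab : a ≤ b) :
    ∃ c, IsLeast {c | IncreasingPath w a b c} c :=
  Set.exists_min_image _ id (finite_setOf_cost w a b) (exists_cost_of_le w hab)

theorem of_seq [LT V] [AddCommMonoid M] (w : V → V → M) {t : ℕ → V} {n : ℕ}
    (ht : ∀ l, 1 ≤ l → l < n + 1 → t l < t (l + 1)) :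
    IncreasingPath w (t 1) (t (n + 1)) (∑ l ∈ Icc 1 n, w (t l) (t (l + 1))) := by
  induction n with
  | zero => exact nil
  | succ n ih =>
    rw [sum_Icc_succ_top (by omega)]
    exact (ih fun l hl hln => ht l hl (by omega)).snoc (ht (n + 1) (by omega) (by omega))

theorem exists_seq [LT V] [AddCommMonoid M] (hp : IncreasingPath w a b c) :
    ∃ (n : ℕ) (t : ℕ → V), t 1 = a ∧ t (n + 1) = b ∧
      (∀ l, 1 ≤ l → l < n + 1 → t l < t (l + 1)) ∧
      ∑ l ∈ Icc 1 n, w (t l) (t (l + 1)) = c := by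
  induction hp with
  | nil => exact ⟨0, fun _ => a, rfl, rfl, by omega, rfl⟩
  | @snoc i j c _ hij ih =>
    obtain ⟨n, t, ht_start, ht_end, ht_lt, ht_sum⟩ := ih
    let t' := Function.update t (n + 2) j
    have ht'_of_le : ∀ l ≤ n + 1, t' l = t l := fun l hl =>
      Function.update_of_ne (by omega) _ _
    have ht'_end : t' (n + 2) = j := Function.update_self _ _ _
    refine ⟨n + 1, t', by rw [ht'_of_le 1 (by omega), ht_start], ht'_end, fun l hl hln => ?_, ?_⟩
    · rcases Nat.lt_succ_iff_lt_or_eq.mp hln with hlt | rfl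
      · rw [ht'_of_le l (by omega), ht'_of_le (l + 1) (by omega)]
        exact ht_lt l hl hlt
      · rwa [ht'_of_le _ le_rfl, ht'_end, ht_end]
    · rw [sum_Icc_succ_top (by omega), ht'_of_le _ le_rfl, ht'_end, ht_end, ← ht_sum]
      congr 1
      refine sum_congr rfl fun l hl => ?_
      rw [mem_Icc] at hl
      rw [ht'_of_le l (by omega), ht'_of_le (l + 1) (by omega)]

theorem iff_exists_seq [LT V] [AddCommMonoid M] :
    IncreasingPath w a b c ↔ ∃ (m : ℕ) (t : ℕ → V), 1 ≤ m ∧ t 1 = a ∧ t m = b ∧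
      (∀ l, 1 ≤ l → l < m → t l < t (l + 1)) ∧
      ∑ l ∈ Icc 1 (m - 1), w (t l) (t (l + 1)) = c := by
  constructor
  · intro hp
    obtain ⟨n, t, ht⟩ := hp.exists_seq
    exact ⟨n + 1, t, by omega, ht⟩
  · rintro ⟨m, t, hm, rfl, rfl, ht_lt, rfl⟩
    obtain ⟨n, rfl⟩ := Nat.exists_eq_add_of_le' hm
    exact of_seq w ht_lt

end IncreasingPath

end IncreasingPath

theorem sum_Ico_sum_Ico_succ {R : Type*} [Ring R] (d : ℕ → R) (i j : ℕ) :
    ∑ t ∈ Ico i j, ∑ k ∈ Ico (t + 1) j, d k = ∑ k ∈ Ico i j, ((k : R) - i) * d k := by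
  rw [sum_Ico_Ico_comm']
  refine sum_congr rfl fun k hk => ?_
  rw [sum_const, Nat.card_Ico, nsmul_eq_mul, Nat.cast_sub (mem_Ico.mp hk).1]

section Costs

variable (K h v : ℝ) (d q I δ : ℕ → ℝ)

theorem arcCost_self (i : ℕ) : arcCost K h v d i i = K := by
  simp [arcCost]

theorem arcCost_succ_right {i j : ℕ} (hij : i ≤ j) :
    arcCost K h v d i (j + 1) = arcCost K h v d i j + (v + h * ((j : ℝ) - i)) * d j := by
  unfold arcCost
  rw [sum_Ico_succ_top hij, sum_Ico_succ_top hij]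
  ring

theorem planCost_zero : planCost 0 K h v q I δ = 0 := by
  simp [planCost]

theorem planCost_succ (n : ℕ) :
    planCost (n + 1) K h v q I δ =
      planCost n K h v q I δ + (K * δ (n + 1) + h * I (n + 1) + v * q (n + 1)) :=
  sum_Icc_succ_top (by omega) _

theorem planCost_eq_add_sum_Ico {n m : ℕ} (hnm : n ≤ m) :
    planCost m K h v q I δ = planCost n K h v q I δ +
      ∑ t ∈ Ico (n + 1) (m + 1), (K * δ t + h * I t + v * q t) := by
  simp only [planCost, ← Ico_add_one_right_eq_Icc]
  exact (sum_Ico_consecutive _ (by omega) (by omega)).symm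

end Costs

section AppendLot

variable {d q I δ : ℕ → ℝ} {n m : ℕ}

/-- The order quantities `q` up to period `n`, followed by a single order in period `n + 1`
covering the demands of periods `n + 1, …, m`. -/
def appendLotOrder (d q : ℕ → ℝ) (n m : ℕ) : ℕ → ℝ :=
  (Set.Iic n).piecewise q (Pi.single (n + 1) (∑ k ∈ Ico (n + 1) (m + 1), d k))

/-- The inventory levels `I` up to period `n`, followed by those of a lot covering the demands
of periods `n + 1, …, m`: after period `t` the demands of periods `t + 1, …, m` are in stock. -/
def appendLotInventory (d I : ℕ → ℝ) (n m : ℕ) : ℕ → ℝ :=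
  (Set.Iic n).piecewise I fun t => ∑ k ∈ Ico (t + 1) (m + 1), d k

/-- The setup indicators `δ` up to period `n`, followed by a single setup in period `n + 1`. -/
def appendLotSetup (δ : ℕ → ℝ) (n : ℕ) : ℕ → ℝ :=
  (Set.Iic n).piecewise δ (Pi.single (n + 1) 1)

theorem appendLotOrder_of_le {t : ℕ} (ht : t ≤ n) : appendLotOrder d q n m t = q t :=
  Set.piecewise_eq_of_mem _ _ _ ht

theorem appendLotOrder_succ :
    appendLotOrder d q n m (n + 1) = ∑ k ∈ Ico (n + 1) (m + 1), d k := by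
  simp [appendLotOrder]

theorem appendLotOrder_of_succ_lt {t : ℕ} (ht : n + 1 < t) : appendLotOrder d q n m t = 0 := by
  rw [appendLotOrder, Set.piecewise_eq_of_notMem _ _ _ (Set.notMem_Iic.mpr (by omega)),
    Pi.single_eq_of_ne ht.ne']

theorem appendLotInventory_of_le {t : ℕ} (ht : t ≤ n) : appendLotInventory d I n m t = I t :=
  Set.piecewise_eq_of_mem _ _ _ ht

theorem appendLotInventory_of_lt {t : ℕ} (ht : n < t) :
    appendLotInventory d I n m t = ∑ k ∈ Ico (t + 1) (m + 1), d k :=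
  Set.piecewise_eq_of_notMem _ _ _ (Set.notMem_Iic.mpr ht)

theorem appendLotInventory_last (hnm : n < m) : appendLotInventory d I n m m = 0 := by
  rw [appendLotInventory_of_lt hnm, Ico_self, sum_empty]

theorem appendLotSetup_of_le {t : ℕ} (ht : t ≤ n) : appendLotSetup δ n t = δ t :=
  Set.piecewise_eq_of_mem _ _ _ ht

theorem appendLotSetup_succ : appendLotSetup δ n (n + 1) = 1 := by
  simp [appendLotSetup]

theorem appendLotSetup_of_succ_lt {t : ℕ} (ht : n + 1 < t) : appendLotSetup δ n t = 0 := by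
  rw [appendLotSetup, Set.piecewise_eq_of_notMem _ _ _ (Set.notMem_Iic.mpr (by omega)),
    Pi.single_eq_of_ne ht.ne']

theorem FeasiblePlan.appendLot (hd : ∀ t ∈ Ico (n + 1) (m + 1), 0 ≤ d t)
    (hplan : FeasiblePlan n d q I δ) (hI : I n = 0) :
    FeasiblePlan m d (appendLotOrder d q n m) (appendLotInventory d I n m)
      (appendLotSetup δ n) := by
  have sum_nonneg_of_lt : ∀ s, n < s → 0 ≤ ∑ k ∈ Ico s (m + 1), d k := fun s hs =>
    sum_nonneg fun k hk => hd k (Ico_subset_Ico_left hs hk)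
  refine ⟨by rw [appendLotInventory_of_le n.zero_le, hplan.1], fun t ht => ?_⟩
  obtain ⟨ht₁, htm⟩ := mem_Icc.mp ht
  rcases lt_trichotomy t (n + 1) with hlt | rfl | hgt
  · have htn : t ≤ n := Nat.lt_succ_iff.mp hlt
    rw [appendLotOrder_of_le htn, appendLotInventory_of_le htn, appendLotSetup_of_le htn,
      appendLotInventory_of_le ((Nat.sub_le t 1).trans htn)]
    exact hplan.2 t (mem_Icc.mpr ⟨ht₁, htn⟩)
  · rw [appendLotOrder_succ, appendLotInventory_of_lt n.lt_succ_self, appendLotSetup_succ,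
      Nat.add_sub_cancel, appendLotInventory_of_le le_rfl, hI]
    refine ⟨sum_nonneg_of_lt _ (by omega), sum_nonneg_of_lt _ (by omega), Or.inr rfl, ?_,
      fun h => absurd h one_ne_zero⟩
    rw [sum_eq_sum_Ico_succ_bot (by omega : n + 1 < m + 1)]
    ring
  · rw [appendLotOrder_of_succ_lt hgt, appendLotInventory_of_lt (by omega),
      appendLotSetup_of_succ_lt hgt, appendLotInventory_of_lt (by omega : n < t - 1),
      Nat.sub_add_cancel ht₁]
    refine ⟨le_rfl, sum_nonneg_of_lt _ (by omega), Or.inl rfl, ?_, fun _ => rfl⟩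
    rw [sum_eq_sum_Ico_succ_bot (by omega : t < m + 1)]
    ring

theorem sum_Ico_appendLotSetup (δ : ℕ → ℝ) (hnm : n < m) :
    ∑ t ∈ Ico (n + 1) (m + 1), appendLotSetup δ n t = 1 := by
  rw [sum_eq_single_of_mem (n + 1) (mem_Ico.mpr (by omega)), appendLotSetup_succ]
  intro t ht hne
  exact appendLotSetup_of_succ_lt (lt_of_le_of_ne (mem_Ico.mp ht).1 hne.symm)

theorem sum_Ico_appendLotOrder (d q : ℕ → ℝ) (hnm : n < m) :
    ∑ t ∈ Ico (n + 1) (m + 1), appendLotOrder d q n m t = ∑ k ∈ Ico (n + 1) (m + 1), d k := by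
  rw [sum_eq_single_of_mem (n + 1) (mem_Ico.mpr (by omega)), appendLotOrder_succ]
  intro t ht hne
  exact appendLotOrder_of_succ_lt (lt_of_le_of_ne (mem_Ico.mp ht).1 hne.symm)

theorem sum_Ico_appendLotInventory (d I : ℕ → ℝ) (n m : ℕ) :
    ∑ t ∈ Ico (n + 1) (m + 1), appendLotInventory d I n m t =
      ∑ k ∈ Ico (n + 1) (m + 1), ((k : ℝ) - (n + 1 : ℕ)) * d k := by
  rw [← sum_Ico_sum_Ico_succ]
  exact sum_congr rfl fun t ht => appendLotInventory_of_lt (mem_Ico.mp ht).1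

theorem planCost_appendLot (K h v : ℝ) (d q I δ : ℕ → ℝ) (hnm : n < m) :
    planCost m K h v (appendLotOrder d q n m) (appendLotInventory d I n m) (appendLotSetup δ n) =
      planCost n K h v q I δ + arcCost K h v d (n + 1) (m + 1) := by
  rw [planCost_eq_add_sum_Ico _ _ _ _ _ _ hnm.le]
  congr 1
  · refine sum_congr rfl fun t ht => ?_
    have htn : t ≤ n := (mem_Icc.mp ht).2
    rw [appendLotOrder_of_le htn, appendLotInventory_of_le htn, appendLotSetup_of_le htn]
  · rw [sum_add_distrib, sum_add_distrib, ← mul_sum, ← mul_sum, ← mul_sum,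
      sum_Ico_appendLotSetup δ hnm, sum_Ico_appendLotOrder d q hnm, sum_Ico_appendLotInventory,
      arcCost]
    ring

end AppendLot

section LotSizing

variable {N : ℕ} {d q I δ : ℕ → ℝ} {K h v : ℝ}

-- Node `j` is the start of period `j`, so a path to `j` plans the first `j - 1` periods.
theorem IncreasingPath.exists_feasiblePlan {j : ℕ} {c : ℝ}
    (hp : IncreasingPath (arcCost K h v d) 1 j c) (hd : ∀ t ∈ Ico 1 j, 0 ≤ d t) :
    ∃ q I δ : ℕ → ℝ, FeasiblePlan (j - 1) d q I δ ∧ I (j - 1) = 0 ∧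
      planCost (j - 1) K h v q I δ = c := by
  induction hp with
  | nil => exact ⟨0, 0, 0, ⟨rfl, by simp⟩, rfl, planCost_zero _ _ _ _ _ _⟩
  | @snoc i j c hp hij ih =>
    obtain ⟨q, I, δ, hplan, hI, rfl⟩ := ih fun t ht => hd t (Ico_subset_Ico_right hij.le ht)
    obtain ⟨n, rfl⟩ := Nat.exists_eq_add_of_le' hp.le
    obtain ⟨m, rfl⟩ := Nat.exists_eq_add_of_le' (hp.le.trans hij.le)
    have hnm : n < m := Nat.lt_of_succ_lt_succ hij
    have hd_lot : ∀ t ∈ Ico (n + 1) (m + 1), 0 ≤ d t := fun t ht =>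
      hd t (Ico_subset_Ico_left (by omega) ht)
    exact ⟨_, _, _, hplan.appendLot hd_lot hI, appendLotInventory_last hnm,
      planCost_appendLot K h v d q I δ hnm⟩

theorem FeasiblePlan.setup_one_eq_one (hplan : FeasiblePlan N d q I δ) (hN : 1 ≤ N)
    (hd₁ : 0 < d 1) : δ 1 = 1 := by
  obtain ⟨-, hI_nonneg, hδ, hbal, hq_zero⟩ := hplan.2 1 (mem_Icc.mpr ⟨le_rfl, hN⟩)
  refine hδ.resolve_left fun hδ_zero => ?_
  rw [Nat.sub_self, hplan.1, hq_zero hδ_zero] at hbal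
  linarith

theorem FeasiblePlan.exists_path_add_stock_le_planCost (hh : 0 ≤ h) (hd₁ : 0 < d 1)
    (hplan : FeasiblePlan N d q I δ) {n : ℕ} (hn : 1 ≤ n) (hnN : n ≤ N) :
    ∃ i c, i ≤ n ∧ IncreasingPath (arcCost K h v d) 1 i c ∧
      c + arcCost K h v d i (n + 1) + (v + h * ((n : ℝ) + 1 - i)) * I n ≤
        planCost n K h v q I δ := by
  induction n, hn using Nat.le_induction with
  | base =>
    refine ⟨1, 0, le_rfl, .nil, le_of_eq ?_⟩
    have hbal : I 1 = I 0 + q 1 - d 1 := (hplan.2 1 (mem_Icc.mpr ⟨le_rfl, hnN⟩)).2.2.2.1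
    have hq : q 1 = I 1 + d 1 := by linarith [hplan.1]
    rw [arcCost_succ_right _ _ _ _ le_rfl, arcCost_self, planCost_succ, planCost_zero,
      hplan.setup_one_eq_one hnN hd₁, hq]
    push_cast
    ring
  | succ n hn ih =>
    obtain ⟨i, c, hin, hp, hle⟩ := ih (by omega)
    have hI_nonneg : 0 ≤ I n := (hplan.2 n (mem_Icc.mpr ⟨hn, by omega⟩)).2.1
    obtain ⟨-, -, hδ, hbal, hq_zero⟩ := hplan.2 (n + 1) (mem_Icc.mpr ⟨by omega, hnN⟩)
    rw [Nat.add_sub_cancel] at hbal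
    rw [planCost_succ]
    rcases hδ with hδ | hδ
    · have hI : I n = I (n + 1) + d (n + 1) := by linarith [hq_zero hδ]
      refine ⟨i, c, by omega, hp, ?_⟩
      rw [arcCost_succ_right _ _ _ _ (by omega), hδ, hq_zero hδ]
      rw [hI] at hle
      push_cast
      linarith
    · have hq : q (n + 1) = I (n + 1) + d (n + 1) - I n := by linarith
      have hin' : (i : ℝ) ≤ n := by exact_mod_cast hin
      have hrevalue : v * I n ≤ (v + h * ((n : ℝ) + 1 - i)) * I n :=
        mul_le_mul_of_nonneg_right
          (le_add_of_nonneg_right (mul_nonneg hh (by linarith))) hI_nonneg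
      refine ⟨n + 1, _, le_rfl, hp.snoc (by omega), ?_⟩
      rw [arcCost_succ_right _ _ _ _ le_rfl, arcCost_self, hδ, hq]
      push_cast
      linarith

theorem FeasiblePlan.exists_path_le_planCost (hh : 0 ≤ h) (hvh : 0 ≤ v + h)
    (hd₁ : 1 ≤ N → 0 < d 1) (hplan : FeasiblePlan N d q I δ) :
    ∃ c, IncreasingPath (arcCost K h v d) 1 (N + 1) c ∧ c ≤ planCost N K h v q I δ := by
  rcases N.eq_zero_or_pos with rfl | hN
  · exact ⟨0, .nil, (planCost_zero _ _ _ _ _ _).ge⟩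
  · obtain ⟨i, c, hiN, hp, hle⟩ :=
      hplan.exists_path_add_stock_le_planCost (K := K) (v := v) hh (hd₁ hN) hN le_rfl
    refine ⟨_, hp.snoc (Nat.lt_succ_of_le hiN), le_trans (le_add_of_nonneg_right ?_) hle⟩
    have hiN' : (i : ℝ) ≤ N := by exact_mod_cast hiN
    have hprice : 0 ≤ v + h * ((N : ℝ) + 1 - i) := by
      linarith [mul_nonneg hh (sub_nonneg.mpr hiN')]
    exact mul_nonneg hprice (hplan.2 N (mem_Icc.mpr ⟨hN, le_rfl⟩)).2.1

end LotSizing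

theorem lot_sizing_shortest_path_general (N : ℕ) (d : ℕ → ℝ)
    (hd₁ : 1 ≤ N → 0 < d 1) (hd : ∀ t ∈ Finset.Icc 1 N, 0 ≤ d t)
    (K h v : ℝ) (hh : 0 ≤ h) (hvh : 0 ≤ v + h) :
    ∃ c : ℝ,
      IsLeast {c : ℝ | ∃ q I δ : ℕ → ℝ,
        FeasiblePlan N d q I δ ∧ planCost N K h v q I δ = c} c ∧
      IsLeast {c : ℝ | ∃ (m : ℕ) (t : ℕ → ℕ),
        1 ≤ m ∧ t 1 = 1 ∧ t m = N + 1 ∧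
        (∀ l, 1 ≤ l → l < m → t l < t (l + 1)) ∧
        ∑ l ∈ Finset.Icc 1 (m - 1), arcCost K h v d (t l) (t (l + 1)) = c} c := by
  simp only [← IncreasingPath.iff_exists_seq]
  obtain ⟨c, hc, hc_le⟩ :=
    IncreasingPath.exists_isLeast_cost (arcCost K h v d) (Nat.le_add_left 1 N)
  refine ⟨c, ⟨?_, ?_⟩, hc, hc_le⟩
  · obtain ⟨q, I, δ, hplan, -, hcost⟩ :=
      hc.exists_feasiblePlan (by rwa [Ico_add_one_right_eq_Icc])
    exact ⟨q, I, δ, hplan, hcost⟩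
  · rintro _ ⟨q, I, δ, hplan, rfl⟩
    obtain ⟨c', hp, hle⟩ := hplan.exists_path_le_planCost hh hvh hd₁
    exact (hc_le hp).trans hle

/-- The minimum total cost over all feasible plans of the Wagner–Whitin
lot-sizing problem equals the minimum, over all increasing sequences
`1 = t_1 < t_2 < ⋯ < t_m = N + 1`, of `Σ_{l=1}^{m−1} ω(t_l, t_{l+1})`:
the lot-sizing problem is a shortest path problem on the acyclic network with
nodes `1, …, N + 1` and arc costs `ω`. -/
theorem lot_sizing_shortest_path (N : ℕ) (d : ℕ → ℝ)
    (hd : ∀ t ∈ Finset.Icc 1 N, 0 < d t)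
    (K h v : ℝ) (hK : 0 ≤ K) (hh : 0 ≤ h) (hv : 0 ≤ v) :
    ∃ c : ℝ,
      IsLeast {c : ℝ | ∃ q I δ : ℕ → ℝ,
        FeasiblePlan N d q I δ ∧ planCost N K h v q I δ = c} c ∧
      IsLeast {c : ℝ | ∃ (m : ℕ) (t : ℕ → ℕ),
        1 ≤ m ∧ t 1 = 1 ∧ t m = N + 1 ∧
        (∀ l, 1 ≤ l → l < m → t l < t (l + 1)) ∧
        ∑ l ∈ Finset.Icc 1 (m - 1), arcCost K h v d (t l) (t (l + 1)) = c} c :=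
  lot_sizing_shortest_path_general N d (fun hN => hd 1 (Finset.mem_Icc.mpr ⟨le_rfl, hN⟩))
    (fun t ht => (hd t ht).le) K h v hh (add_nonneg hv hh)
end
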